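/- Commutator relations on W(ϖ1) (part of the verification that the given operators define the fundamental representation of type G2^(1)): as linear endomorphisms of V one has [e_i, f_j] = 0 for all i ≠ j in {0,1,2}, and for each i ∈ {0,1,2} the operator h_i := [e_i, f_i] acts diagonally with h_i(b) = wt(b)_i · b for every basis vector b (where wt(b)_i is the i-th coordinate of wt(b)). -/

import Mathlib

noncomputable section

/-- The 15-dimensional space: basis indices 0..5 = b1..b6, 6..11 = b1'..b6',
12 = c1, 13 = c2, 14 = u. -/
abbrev VC := Fin 15 → ℂ

def f0op (v : VC) : VC :=
  ![v 13 + 2*v 14, v 11, v 9, v 8, 0, v 7, 0, 0, 0, 0, 0, 0, 0, 0, v 6]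

def f1op (v : VC) : VC :=
  ![0, v 0, 0, 0, v 3, 0, v 7, 0, 0, v 10, 0, 3*v 12 + 2*v 13 + v 14, 0, v 5, 0]

def f2op (v : VC) : VC :=
  ![0, 0, v 1, 2*v 2, 0, 3*v 3, 0, 3*v 8, 2*v 9, v 11, 2*v 12 + v 13, 0, v 4, 0, 0]

def e0op (v : VC) : VC :=
  ![0, 0, 0, 0, 0, 0, v 13 + 2*v 14, v 5, v 3, v 2, 0, v 1, 0, 0, v 0]

def e1op (v : VC) : VC :=
  ![v 1, 0, 0, v 4, 0, 3*v 12 + 2*v 13 + v 14, 0, v 6, 0, 0, v 9, 0, 0, v 11, 0]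

def e2op (v : VC) : VC :=
  ![0, 3*v 2, 2*v 3, v 5, 2*v 12 + v 13, 0, 0, 0, v 7, 2*v 8, 0, 3*v 9, v 10, 0, 0]

def wtv : Fin 15 → Fin 3 → ℤ :=
  ![![-2,1,0], ![-1,-1,3], ![-1,0,1], ![-1,1,-1], ![0,-1,2], ![-1,2,-3],
    ![2,-1,0], ![1,1,-3], ![1,0,-1], ![1,-1,1], ![0,1,-2], ![1,-2,3],
    ![0,0,0], ![0,0,0], ![0,0,0]]

end

noncomputable section

def eops : Fin 3 → (VC → VC) := ![e0op, e1op, e2op]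

def fops : Fin 3 → (VC → VC) := ![f0op, f1op, f2op]

end

/-- Commutator relations on `W(ϖ1)`: `[e_i, f_j] = 0` for `i ≠ j`, and
`h_i := [e_i, f_i]` acts diagonally with eigenvalue `wt(b)_i` on each basis vector. -/
theorem commutator_relations :
    (∀ i j : Fin 3, i ≠ j → ∀ v : VC, eops i (fops j v) - fops j (eops i v) = 0) ∧
    (∀ i : Fin 3, ∀ v : VC, ∀ k : Fin 15,
      eops i (fops i v) k - fops i (eops i v) k = (wtv k i : ℂ) * v k) := by
  constructor
  · intro i j hij v
    ext k
    fin_cases i <;> fin_cases j <;> try exact absurd rfl hij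
    all_goals
      fin_cases k <;>
        simp [eops, fops, e0op, e1op, e2op, f0op, f1op, f2op]
  · intro i v k
    fin_cases i <;> fin_cases k <;>
      simp [eops, fops, e0op, e1op, e2op, f0op, f1op, f2op, wtv] <;> ring
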